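/- Let c ∈ (0,1), assume k_c > 0 satisfies a(k_c) = c, m'(k_c) ≠ 0, and m(k) ≠ 0 for all real k ∉ {−k_c, k_c}, let (Ψ_δ)_{δ>0} satisfy Assumption A with constant C_Ψ and I_δ = 0 for all δ > 0, and let R₀ be an unperturbed wave. Fix κ with 1/2 < κ < 1. Then there exists δ_κ > 0 such that the following holds for all 0 < δ < δ_κ: if R ∈ W^{2,∞}(ℝ) and μ ∈ ℝ satisfy M R = A²(Ψ'_δ ∘ R) + μ, R(0) = 0, the limit lim_{x→+∞}(R(x) − R₀(x)) exists, R(x) ≤ −δ for all x ≤ −δ^κ, and R(x) ≥ +δ for all x ≥ +δ^κ, then R = R₀ + S for every S ∈ X that is δ-admissible relative to R₀ and for which R₀ + S satisfies M(R₀ + S) = A²(Ψ'_δ ∘ (R₀ + S)) + μ' for some μ' ∈ ℝ; in particular all such correctors S coincide and R belongs to the family of waves provided by the existence result. -/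

import Mathlib

open MeasureTheory Real Filter Topology

/-- The averaging operator `(A F)(x) = ∫_{x-1/2}^{x+1/2} F(s) ds`. -/
noncomputable def Aop (F : ℝ → ℝ) : ℝ → ℝ := fun x => ∫ s in (x - 1/2)..(x + 1/2), F s

/-- The operator `M F = A(A F) - c² F`. -/
noncomputable def Mop (c : ℝ) (F : ℝ → ℝ) : ℝ → ℝ := fun x => Aop (Aop F) x - c ^ 2 * F x

/-- Membership in `W^{2,∞}(ℝ)`. -/
def IsW2inf (S : ℝ → ℝ) : Prop :=
  Differentiable ℝ S ∧ (∃ C : ℝ, ∀ x, |S x| ≤ C ∧ |deriv S x| ≤ C) ∧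
    ∃ K : NNReal, LipschitzWith K (deriv S)

/-- Assumption A for the family `(Ψ_δ)_{δ>0}` with constant `C_Ψ`. -/
def AssumptionA (Ψ : ℝ → ℝ → ℝ) (CΨ : ℝ) : Prop :=
  0 < CΨ ∧ ∀ δ : ℝ, 0 < δ →
    Ψ δ 0 = 0 ∧ ContDiff ℝ 2 (Ψ δ) ∧
    (∀ r : ℝ, δ ≤ |r| → deriv (Ψ δ) r = Real.sign r) ∧
    (∀ r : ℝ, |deriv (Ψ δ) r| ≤ CΨ) ∧
    (∀ r : ℝ, |deriv (deriv (Ψ δ)) r| ≤ CΨ / δ)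

/-- The quantity `I_δ = ½ ∫_ℝ (Ψ'_δ(r) − sgn r) dr`. -/
noncomputable def Idelta (Ψ : ℝ → ℝ → ℝ) (δ : ℝ) : ℝ :=
  (1 / 2) * ∫ r : ℝ, (deriv (Ψ δ) r - Real.sign r)

/-- An unperturbed wave `R₀`: a `W^{2,∞}` solution of `M R₀ = A²(sgn ∘ R₀) + μ₀` with
`R₀(0) = 0` which leaves a neighbourhood of `0` monotonically and stays away from `0`. -/
def UnperturbedWave (c : ℝ) (R₀ : ℝ → ℝ) : Prop :=
  IsW2inf R₀ ∧ R₀ 0 = 0 ∧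
  (∃ μ₀ : ℝ, ∀ x, Mop c R₀ x = Aop (Aop (fun y => Real.sign (R₀ y))) x + μ₀) ∧
  ∃ x₀ r₀ d₀ : ℝ, 0 < x₀ ∧ 0 < r₀ ∧ 0 < d₀ ∧
    (∀ x, x₀ < x → r₀ < R₀ x) ∧ (∀ x, x < -x₀ → R₀ x < -r₀) ∧
    (∀ x, |x| < x₀ → d₀ < deriv R₀ x)

/-- `δ`-admissibility of a corrector `S` relative to `R₀`. -/
def Admissible (δ : ℝ) (R₀ S : ℝ → ℝ) : Prop :=
  IsW2inf S ∧ S 0 = 0 ∧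
  ∃ xm xp : ℝ, xm < 0 ∧ 0 < xp ∧
    R₀ xm + S xm = -δ ∧ R₀ xp + S xp = δ ∧
    (∀ x, x < xm → R₀ x + S x < -δ) ∧
    (∀ x, xp < x → δ < R₀ x + S x) ∧
    (∀ x, xm < x → x < xp →
      deriv R₀ 0 / 2 < deriv R₀ x + deriv S x ∧ deriv R₀ x + deriv S x < 2 * deriv R₀ 0)

/-- The nonlinear superposition operator `G(S)(x) = Ψ'_δ(R₀(x)+S(x)) − sgn(R₀(x))`. -/
noncomputable def Gop (Ψ : ℝ → ℝ → ℝ) (δ : ℝ) (R₀ S : ℝ → ℝ) : ℝ → ℝ :=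
  fun x => deriv (Ψ δ) (R₀ x + S x) - Real.sign (R₀ x)

/-- The symbol `a(k) = sin(k/2)/(k/2)`, with `a(0) = 1`. -/
noncomputable def symb (k : ℝ) : ℝ := if k = 0 then 1 else Real.sin (k / 2) / (k / 2)

/-- The symbol `m(k) = a(k)² - c²`. -/
noncomputable def msymb (c : ℝ) : ℝ → ℝ := fun k => (symb k) ^ 2 - c ^ 2

/-- The space `X` of `S ∈ W^{2,∞}(ℝ)` with `S(0) = 0` such that `lim_{x→+∞} S(x)` exists. -/
def IsX (S : ℝ → ℝ) : Prop := IsW2inf S ∧ S 0 = 0 ∧ ∃ l : ℝ, Tendsto S atTop (nhds l)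


section helpers
open FourierTransform
open scoped ContDiff

/-- Smooth compactly supported functions. -/
def CCs (b : ℝ → ℂ) : Prop := ContDiff ℝ ∞ b ∧ HasCompactSupport b

/-- Convolution with the Fourier transform of `b`. -/
noncomputable def Tc (b : ℝ → ℂ) (F : ℝ → ℝ) (x : ℝ) : ℂ := ∫ y, 𝓕 b y * (F (x - y) : ℂ)

/-- entire extension of the symbol a -/
noncomputable def aC (z : ℂ) : ℂ := dslope Complex.sin 0 (z / 2)

lemma dslope_entire {f : ℂ → ℂ} (hf : Differentiable ℂ f) (p : ℂ) :
    Differentiable ℂ (dslope f p) := by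
  have := (Complex.differentiableOn_dslope (f := f) (s := Set.univ) (c := p) univ_mem).2
    hf.differentiableOn
  exact differentiableOn_univ.1 this

lemma aC_diff : Differentiable ℂ aC := by
  have := dslope_entire Complex.differentiable_sin 0
  exact this.comp (differentiable_id.div_const 2)

lemma aC_real (k : ℝ) : aC (k : ℂ) = (symb k : ℂ) := by
  unfold aC symb
  by_cases hk : k = 0
  · subst hk; simp
  · rw [if_neg hk, dslope_of_ne]
    · rw [slope_def_field]; push_cast; simp
    · simpa using hk

lemma entire_real_smooth {f : ℂ → ℂ} (hf : Differentiable ℂ f) (s : ℝ) :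
    ContDiff ℝ ∞ (fun k : ℝ => f ((s * k : ℝ) : ℂ)) := by
  have h1 : ContDiff ℂ ∞ f := hf.contDiff
  have h2 : ContDiff ℝ ∞ f := h1.restrict_scalars ℝ
  have h3 : ContDiff ℝ ∞ (fun k : ℝ => ((s * k : ℝ) : ℂ)) :=
    Complex.ofRealCLM.contDiff.comp (contDiff_const.mul contDiff_id)
  exact h2.comp h3

lemma symb_smooth : ContDiff ℝ ∞ (fun k : ℝ => (symb (2 * π * k) : ℂ)) := by
  have := entire_real_smooth aC_diff (2 * π)
  simpa only [aC_real] using this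

lemma CCs.mul_left {b : ℝ → ℂ} (hb : CCs b) {g : ℝ → ℂ} (hg : ContDiff ℝ ∞ g) :
    CCs (fun k => g k * b k) := ⟨hg.mul hb.1, hb.2.mul_left⟩

lemma CCs.integrable {b : ℝ → ℂ} (hb : CCs b) : Integrable b :=
  hb.1.continuous.integrable_of_hasCompactSupport hb.2

lemma CCs.schwartz {b : ℝ → ℂ} (hb : CCs b) : ∃ f : SchwartzMap ℝ ℂ, ⇑f = 𝓕 b := by
  refine ⟨𝓕 (hb.2.toSchwartzMap hb.1), ?_⟩
  rw [SchwartzMap.fourier_coe]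
  rfl

lemma CCs.fint {b : ℝ → ℂ} (hb : CCs b) : Integrable (𝓕 b) := by
  obtain ⟨f, hf⟩ := hb.schwartz
  rw [← hf]; exact f.integrable

lemma CCs.fint1 {b : ℝ → ℂ} (hb : CCs b) : Integrable (fun y => |y| * ‖𝓕 b y‖) := by
  obtain ⟨f, hf⟩ := hb.schwartz
  rw [← hf]; simpa using f.integrable_pow_mul volume 1

lemma CCs.fcont {b : ℝ → ℂ} (hb : CCs b) : Continuous (𝓕 b) := by
  obtain ⟨f, hf⟩ := hb.schwartz
  rw [← hf]; exact f.continuous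

lemma CCs.fint_total {b : ℝ → ℂ} (hb : CCs b) : ∫ y, 𝓕 b y = b 0 := by
  have h := hb.1.continuous.fourierInv_fourier_eq hb.integrable hb.fint
  have h2 := congrFun h 0
  rw [Real.fourierInv_eq] at h2
  simpa using h2

lemma CCs.hasDeriv {b : ℝ → ℂ} (hb : CCs b) (y : ℝ) :
    HasDerivAt (𝓕 b) (𝓕 (fun x : ℝ => (-2 * π * Complex.I * x) * b x) y) y := by
  have h := Real.hasDerivAt_fourier hb.integrable (f := b) ?_ y
  · simpa only [smul_eq_mul] using h
  · have := (hb.mul_left (g := fun x : ℝ => (x : ℂ)) Complex.ofRealCLM.contDiff).integrable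
    simpa using this

lemma CCs.mulX {b : ℝ → ℂ} (hb : CCs b) :
    CCs (fun x : ℝ => (-2 * π * Complex.I * x) * b x) :=
  hb.mul_left (contDiff_const.mul Complex.ofRealCLM.contDiff)

instance finUIoc : IsFiniteMeasure (volume.restrict (Set.uIoc (-(1/2):ℝ) (1/2))) := by
  rw [Set.uIoc_of_le (by norm_num)]
  infer_instance

lemma Aop_eq (F : ℝ → ℝ) (x : ℝ) : Aop F x = ∫ t in (-(1/2):ℝ)..(1/2), F (x + t) := by
  unfold Aop
  rw [intervalIntegral.integral_comp_add_left (fun s => F s)]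
  congr 1

lemma swapA (g : ℝ → ℂ) (hg : Continuous g) (hgi : Integrable g) (F : ℝ → ℝ) (hF : Continuous F)
    (B : ℝ) (hB : ∀ x, |F x| ≤ B) (x : ℝ) :
    ∫ y, g y * (Aop F (x - y) : ℂ) =
      ∫ y, (∫ t in (-(1/2):ℝ)..(1/2), g (y + t)) * (F (x - y) : ℂ) := by
  have hB0 : 0 ≤ B := (abs_nonneg _).trans (hB 0)
  have e1 : ∀ y, g y * (Aop F (x - y) : ℂ) =
      ∫ t in (-(1/2):ℝ)..(1/2), g y * (F (x - y + t) : ℂ) := by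
    intro y
    rw [Aop_eq, ← intervalIntegral.integral_ofReal, intervalIntegral.integral_const_mul]
  have e2 : ∀ y, (∫ t in (-(1/2):ℝ)..(1/2), g (y + t)) * (F (x - y) : ℂ) =
      ∫ t in (-(1/2):ℝ)..(1/2), g (y + t) * (F (x - y) : ℂ) := by
    intro y
    rw [intervalIntegral.integral_mul_const]
  simp_rw [e1, e2]
  rw [← intervalIntegral_integral_swap, ← intervalIntegral_integral_swap]
  · refine intervalIntegral.integral_congr fun t _ => ?_
    rw [← integral_add_right_eq_self _ t]
    refine integral_congr_ae (ae_of_all _ fun y => ?_)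
    beta_reduce
    congr 3
    ring
  · rw [integrable_prod_iff]
    · refine ⟨ae_of_all _ fun t => ?_, ?_⟩
      · refine ((hgi.comp_add_right t).bdd_mul (c := B) (f := fun y => (F (x - y) : ℂ)) ?_ ?_).congr
          (ae_of_all _ fun y => ?_)
        · exact (by fun_prop : Continuous fun y => (F (x - y) : ℂ)).aestronglyMeasurable
        · exact ae_of_all _ fun y => by simpa using hB (x - y)
        · simp [Function.uncurry, mul_comm]
      · refine Integrable.mono' (g := fun _ => B * ∫ y, ‖g y‖) ?_ ?_ ?_
        · exact integrable_const _
        · refine AEStronglyMeasurable.norm ?_ |>.integral_prod_right'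
          exact (by fun_prop : Continuous fun z : ℝ × ℝ =>
            Function.uncurry (fun t y => g (y + t) * (F (x - y) : ℂ)) z).aestronglyMeasurable
        · refine ae_of_all _ fun t => ?_
          rw [Real.norm_of_nonneg (integral_nonneg fun _ => norm_nonneg _)]
          rw [← integral_add_right_eq_self (fun y => ‖g y‖) t, ← integral_const_mul]
          refine integral_mono_of_nonneg (ae_of_all _ fun _ => norm_nonneg _)
            (((hgi.comp_add_right t).norm).const_mul B) (ae_of_all _ fun y => ?_)
          simp only [Function.uncurry, norm_mul, Complex.norm_real, Real.norm_eq_abs]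
          rw [mul_comm]
          exact mul_le_mul_of_nonneg_right (hB _) (norm_nonneg _)
    · exact (by fun_prop : Continuous fun z : ℝ × ℝ =>
            Function.uncurry (fun t y => g (y + t) * (F (x - y) : ℂ)) z).aestronglyMeasurable
  · have h1 : Integrable (fun z : ℝ × ℝ => (1:ℂ) * g z.2)
        ((volume.restrict (Set.uIoc (-(1/2):ℝ) (1/2))).prod volume) :=
      Integrable.mul_prod (f := fun _ : ℝ => (1:ℂ)) (integrable_const _) hgi
    refine (h1.bdd_mul (c := B) (f := fun z : ℝ × ℝ => (F (x - z.2 + z.1) : ℂ)) ?_ ?_).congr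
          (ae_of_all _ fun y => ?_)
    · exact (by fun_prop : Continuous fun z : ℝ × ℝ => (F (x - z.2 + z.1) : ℂ)).aestronglyMeasurable
    · exact ae_of_all _ fun y => by simpa using hB _
    · simp [Function.uncurry, mul_comm]

lemma int_exp (v : ℝ) : ∫ t in (-(1/2):ℝ)..(1/2), (𝐞 (-(v * t)) : ℂ) = (symb (2 * π * v) : ℂ) := by
  have e : ∀ t : ℝ, (𝐞 (-(v * t)) : ℂ) = Complex.exp ((-(2 * π * v) * Complex.I : ℂ) * t) := by
    intro t
    rw [Real.fourierChar_apply]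
    congr 1; push_cast; ring
  simp_rw [e]
  by_cases hv : v = 0
  · subst hv
    simp [symb]; norm_num
  · have hpi := Real.pi_ne_zero
    have hne : (-(2 * π * v) * Complex.I : ℂ) ≠ 0 := by
      simp [hv, hpi]
    rw [integral_exp_mul_complex hne]
    have : (2 * π * v) ≠ 0 := by positivity
    rw [symb, if_neg this]
    push_cast
    rw [Complex.sin]
    have hv' : (v : ℂ) ≠ 0 := by exact_mod_cast hv
    have hpi' : (π : ℂ) ≠ 0 := by exact_mod_cast hpi
    field_simp
    ring_nf
    simp only [Complex.I_sq]
    ring_nf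

lemma fourier_symb {b : ℝ → ℂ} (hb : CCs b) (y : ℝ) :
    𝓕 (fun v => (symb (2 * π * v) : ℂ) * b v) y = ∫ t in (-(1/2):ℝ)..(1/2), 𝓕 b (y + t) := by
  simp_rw [Real.fourier_real_eq]
  rw [intervalIntegral_integral_swap]
  · refine integral_congr_ae (ae_of_all _ fun v => ?_)
    simp only
    rw [← int_exp]
    have : ∀ t : ℝ, 𝐞 (-(v * (y + t))) • b v = (𝐞 (-(v * t)) : ℂ) * (𝐞 (-(v * y)) • b v) := by
      intro t
      rw [mul_add, neg_add, AddChar.map_add_eq_mul, Circle.smul_def, Circle.smul_def]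
      push_cast
      simp only [smul_eq_mul]; ring
    simp_rw [this]
    rw [intervalIntegral.integral_mul_const, Circle.smul_def, Circle.smul_def]
    simp only [smul_eq_mul]; ring
  · have h1 : Integrable (fun z : ℝ × ℝ => (1:ℂ) * b z.2)
        ((volume.restrict (Set.uIoc (-(1/2):ℝ) (1/2))).prod volume) :=
      Integrable.mul_prod (f := fun _ : ℝ => (1:ℂ)) (integrable_const _) hb.integrable
    refine (h1.bdd_mul (c := 1) (f := fun z : ℝ × ℝ => ((𝐞 (-(z.2 * (y + z.1))) : Circle) : ℂ)) ?_ ?_).congr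
          (ae_of_all _ fun z => ?_)
    · have : Continuous fun z : ℝ × ℝ => ((𝐞 (-(z.2 * (y + z.1))) : Circle) : ℂ) := by
        simp_rw [Real.fourierChar_apply]
        fun_prop
      exact this.aestronglyMeasurable
    · exact ae_of_all _ fun z => (Circle.norm_coe _).le
    · simp [Function.uncurry, Circle.smul_def]

lemma Tc_Aop {b : ℝ → ℂ} (hb : CCs b) {F : ℝ → ℝ} (hF : Continuous F)
    {B : ℝ} (hB : ∀ x, |F x| ≤ B) (x : ℝ) :
    Tc b (Aop F) x = Tc (fun v => (symb (2 * π * v) : ℂ) * b v) F x := by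
  unfold Tc
  rw [swapA _ hb.fcont hb.fint F hF B hB]
  simp_rw [fourier_symb hb]

lemma Tc_integrand {b : ℝ → ℂ} (hb : CCs b) {F : ℝ → ℝ} (hF : Continuous F)
    {B : ℝ} (hB : ∀ x, |F x| ≤ B) (x : ℝ) : Integrable (fun y => 𝓕 b y * (F (x - y) : ℂ)) := by
  refine (hb.fint.bdd_mul (c := B) (f := fun y => (F (x - y) : ℂ)) ?_ ?_).congr
          (ae_of_all _ fun y => ?_)
  · exact (by fun_prop : Continuous fun y => (F (x - y) : ℂ)).aestronglyMeasurable
  · exact ae_of_all _ fun y => by simpa using hB (x - y)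
  · exact mul_comm _ _

lemma Tc_tendsto {b : ℝ → ℂ} (hb : CCs b) {F : ℝ → ℝ} (hF : Continuous F)
    {B : ℝ} (hB : ∀ x, |F x| ≤ B) (h0 : Tendsto F atTop (𝓝 0)) :
    Tendsto (Tc b F) atTop (𝓝 0) := by
  have h := tendsto_integral_filter_of_dominated_convergence (μ := volume) (l := (atTop : Filter ℝ))
    (F := fun x y => 𝓕 b y * (F (x - y) : ℂ)) (f := fun _ => (0:ℂ)) (fun y => ‖𝓕 b y‖ * B)
    (Eventually.of_forall fun x => (Tc_integrand hb hF hB x).aestronglyMeasurable)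
    (Eventually.of_forall fun x => ae_of_all _ fun y => ?_) (hb.fint.norm.mul_const B)
    (ae_of_all _ fun y => ?_)
  · simp only [integral_zero] at h
    exact h
  · rw [norm_mul]
    exact mul_le_mul_of_nonneg_left (by simpa using hB (x - y)) (norm_nonneg _)
  · have h1 : Tendsto (fun x : ℝ => x - y) atTop atTop := tendsto_atTop_add_const_right _ (-y) tendsto_id
    have h2 := (Complex.continuous_ofReal.tendsto 0).comp (h0.comp h1)
    simpa using h2.const_mul (𝓕 b y)

lemma Tc_hasDeriv {b : ℝ → ℂ} (hb : CCs b) {F : ℝ → ℝ} (hF : Differentiable ℝ F)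
    {B : ℝ} (hB : ∀ x, |F x| ≤ B) (hB' : ∀ x, |deriv F x| ≤ B) (x : ℝ) :
    HasDerivAt (Tc b F) (Tc (fun x : ℝ => (-2 * π * Complex.I * x) * b x) F x) x := by
  have hdm : ∀ x, AEStronglyMeasurable (fun y => 𝓕 b y * ((deriv F (x - y) : ℝ) : ℂ)) volume := by
    intro x
    refine hb.fcont.aestronglyMeasurable.mul ?_
    have : Measurable fun y => ((deriv F (x - y) : ℝ) : ℂ) :=
      Complex.measurable_ofReal.comp ((measurable_deriv F).comp (measurable_const.sub measurable_id))
    exact this.aestronglyMeasurable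
  have key := hasDerivAt_integral_of_dominated_loc_of_deriv_le (μ := volume) (x₀ := x) (s := Set.univ)
    (F := fun x y => 𝓕 b y * (F (x - y) : ℂ)) (F' := fun x y => 𝓕 b y * ((deriv F (x - y) : ℝ) : ℂ))
    (bound := fun y => ‖𝓕 b y‖ * B) univ_mem
    (Eventually.of_forall fun x => (Tc_integrand hb hF.continuous hB x).aestronglyMeasurable)
    (Tc_integrand hb hF.continuous hB x) (hdm x)
    (ae_of_all _ fun y x _ => by
      rw [norm_mul]
      exact mul_le_mul_of_nonneg_left (by simpa using hB' (x - y)) (norm_nonneg _))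
    (hb.fint.norm.mul_const B)
    (ae_of_all _ fun y x _ => by
      have h1 : HasDerivAt (fun x => F (x - y)) (deriv F (x - y)) x := by
        simpa using (hF (x - y)).hasDerivAt.comp_sub_const x y
      exact h1.ofReal_comp.const_mul _)
  have hib := integral_mul_deriv_eq_deriv_mul_of_integrable
    (u := 𝓕 b) (u' := 𝓕 (fun x : ℝ => (-2 * π * Complex.I * x) * b x))
    (v := fun y => (F (x - y) : ℂ)) (v' := fun y => -((deriv F (x - y) : ℝ) : ℂ))
    (fun y _ => hb.hasDeriv y)
    (fun y _ => by
      have h1 : HasDerivAt (fun y => F (x - y)) (-deriv F (x - y)) y := by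
        have := (hF (x - y)).hasDerivAt.comp_const_sub x y
        simpa using this
      simpa using h1.ofReal_comp)
    (by
      have := key.1.neg
      refine this.congr (ae_of_all _ fun y => ?_)
      simp)
    (Tc_integrand hb.mulX hF.continuous hB x)
    (Tc_integrand hb hF.continuous hB x)
  have e : ∫ y, 𝓕 b y * ((deriv F (x - y) : ℝ) : ℂ)
      = Tc (fun x : ℝ => (-2 * π * Complex.I * x) * b x) F x := by
    simp only [mul_neg, integral_neg, neg_inj] at hib
    exact hib
  rw [← e]
  exact key.2

lemma half_ode {W W1 W2 : ℝ → ℂ} (k : ℝ) {f : ℝ → ℂ} (hf : Integrable f)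
    (h1 : ∀ x, HasDerivAt W (W1 x) x) (h2 : ∀ x, HasDerivAt W1 (W2 x) x)
    (he : ∀ x, W2 x + k ^ 2 * W x = f x)
    (t0 : Tendsto W atTop (𝓝 0)) (t1 : Tendsto W1 atTop (𝓝 0)) (x : ℝ) :
    ‖W1 x - Complex.I * k * W x‖ ≤ ∫ y, ‖f y‖ := by
  set E : ℝ → ℂ := fun x => Complex.exp ((k * x : ℝ) * Complex.I) with hE
  have hEn : ∀ x, ‖E x‖ = 1 := fun x => Complex.norm_exp_ofReal_mul_I _
  have hEd : ∀ x, HasDerivAt E (E x * (k * Complex.I)) x := by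
    intro x
    have h : HasDerivAt (fun x : ℝ => ((k * x : ℝ) : ℂ) * Complex.I) (k * Complex.I) x := by
      have := ((hasDerivAt_id x).const_mul k).ofReal_comp.mul_const Complex.I
      simpa using this
    exact h.cexp
  have hEc : Continuous E := by fun_prop
  have hd : ∀ x, HasDerivAt (fun x => E x * (W1 x - Complex.I * k * W x)) (E x * f x) x := by
    intro x
    have := (hEd x).mul ((h2 x).sub ((h1 x).const_mul (Complex.I * k)))
    refine this.congr_deriv ?_
    simp only [Pi.sub_apply]
    rw [← he x]
    linear_combination (-E x * k ^ 2 * W x) * Complex.I_sq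
  have ht : Tendsto (fun x => E x * (W1 x - Complex.I * k * W x)) atTop (𝓝 0) := by
    rw [tendsto_zero_iff_norm_tendsto_zero]
    have := (t1.sub (t0.const_mul (Complex.I * k))).norm
    simpa [hEn] using this
  have hi : Integrable (fun x => E x * f x) :=
    hf.bdd_mul (c := 1) hEc.aestronglyMeasurable (ae_of_all _ fun x => (hEn x).le)
  have := integral_Ioi_of_hasDerivAt_of_tendsto' (a := x) (fun y _ => hd y) hi.integrableOn ht
  have h3 : ‖W1 x - Complex.I * k * W x‖ = ‖∫ y in Set.Ioi x, E y * f y‖ := by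
    rw [this, zero_sub, norm_neg, norm_mul, hEn, one_mul]
  rw [h3]
  refine (norm_integral_le_integral_norm _).trans ?_
  simp only [norm_mul, hEn, one_mul]
  exact setIntegral_le_integral hf.norm (ae_of_all _ fun _ => norm_nonneg _)

lemma ode_bound {W W1 W2 : ℝ → ℂ} {k : ℝ} (hk : 0 < k) {f : ℝ → ℂ} (hf : Integrable f)
    (h1 : ∀ x, HasDerivAt W (W1 x) x) (h2 : ∀ x, HasDerivAt W1 (W2 x) x)
    (he : ∀ x, W2 x + k ^ 2 * W x = f x)
    (t0 : Tendsto W atTop (𝓝 0)) (t1 : Tendsto W1 atTop (𝓝 0)) (x : ℝ) :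
    ‖W x‖ ≤ (∫ y, ‖f y‖) / k := by
  have a1 := half_ode k hf h1 h2 he t0 t1 x
  have a2 := half_ode (-k) hf h1 h2 (by intro x; push_cast; rw [neg_sq]; exact he x) t0 t1 x
  have e : (2 * Complex.I * k) * W x =
      (W1 x - Complex.I * (-k : ℝ) * W x) - (W1 x - Complex.I * k * W x) := by
    push_cast; ring
  have n := congrArg norm e
  have n2 := norm_sub_le (W1 x - Complex.I * (-k : ℝ) * W x) (W1 x - Complex.I * k * W x)
  rw [← n] at n2
  simp only [norm_mul, Complex.norm_I, Complex.norm_real, Real.norm_eq_abs, abs_of_pos hk] at n2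
  rw [Complex.norm_ofNat] at n2
  rw [le_div_iff₀ hk]
  linarith

lemma exists_mult (c kc : ℝ) (hkc : 0 < kc)
    (ha : symb kc = c) (hm' : deriv (msymb c) kc ≠ 0)
    (hroots : ∀ k : ℝ, k ≠ kc → k ≠ -kc → msymb c k ≠ 0) :
    ∃ v : ℝ → ℂ, ContDiff ℝ ∞ v ∧
      ∀ x : ℝ, v x * ((symb (2 * π * x) : ℂ) ^ 2 - c ^ 2) = (kc : ℂ) ^ 2 - (2 * π * x) ^ 2 := by
  set mC : ℂ → ℂ := fun z => aC z ^ 2 - c ^ 2 with hmC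
  have hd : Differentiable ℂ mC := (aC_diff.pow 2).sub_const _
  have hmr : ∀ k : ℝ, mC k = (msymb c k : ℂ) := by
    intro k; simp [hmC, aC_real, msymb]
  have aeven : ∀ z, aC (-z) = aC z := by
    intro z
    unfold aC
    by_cases hz : z = 0
    · simp [hz]
    · rw [dslope_of_ne _ (by simpa using hz), dslope_of_ne _ (by simpa using hz),
        slope_def_field, slope_def_field]
      simp [neg_div, div_neg]
  have meven : ∀ z, mC (-z) = mC z := by intro z; simp [hmC, aeven]
  have m0 : mC kc = 0 := by rw [hmr, msymb, ha]; simp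
  have m0' : mC (-kc) = 0 := by rw [meven, m0]
  set n1 := dslope mC kc with hn1
  set n2 := dslope n1 (-kc) with hn2
  have hd1 : Differentiable ℂ n1 := dslope_entire hd _
  have hd2 : Differentiable ℂ n2 := dslope_entire hd1 _
  have f1 : ∀ z, mC z = (z - kc) * n1 z := by
    intro z
    have := sub_smul_dslope mC kc z
    rw [m0, sub_zero, smul_eq_mul] at this
    exact this.symm
  have hkcC : (kc : ℂ) ≠ 0 := by exact_mod_cast hkc.ne'
  have n10 : n1 (-kc) = 0 := by
    have := f1 (-kc)
    rw [m0'] at this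
    rcases mul_eq_zero.1 this.symm with h | h
    · exfalso; apply hkcC; linear_combination (-1/2) * h
    · exact h
  have f2 : ∀ z, n1 z = (z + kc) * n2 z := by
    intro z
    have := sub_smul_dslope n1 (-kc) z
    rw [n10, sub_zero, smul_eq_mul, sub_neg_eq_add] at this
    exact this.symm
  have f3 : ∀ z, mC z = (z ^ 2 - kc ^ 2) * n2 z := by
    intro z; rw [f1, f2]; ring
  have dkc : deriv mC kc ≠ 0 := by
    intro h0
    have h1 : HasDerivAt mC 0 (kc : ℂ) := h0 ▸ (hd kc).hasDerivAt
    have h2 := h1.real_of_complex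
    apply hm'
    have : (fun x : ℝ => (mC x).re) = msymb c := by
      funext k; rw [hmr]; simp
    rw [this] at h2
    simpa using h2.deriv
  have dkc' : deriv mC (-kc) ≠ 0 := by
    have : deriv mC (-kc) = - deriv mC kc := by
      have h := deriv_comp_neg mC (kc : ℂ)
      have e : (fun z => mC (-z)) = mC := funext meven
      rw [e] at h
      rw [h, neg_neg]
    rw [this]; simpa using dkc
  have dform : ∀ z, deriv mC z = 2 * z * n2 z + (z ^ 2 - kc ^ 2) * deriv n2 z := by
    intro z
    have e : mC = fun z => (z ^ 2 - kc ^ 2) * n2 z := funext f3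
    have h1 : HasDerivAt (fun z : ℂ => z ^ 2 - (kc : ℂ) ^ 2) (2 * z) z := by
      simpa using (hasDerivAt_pow 2 z).sub_const ((kc : ℂ) ^ 2)
    have := h1.mul (hd2 z).hasDerivAt
    rw [e]
    exact this.deriv
  have nz : ∀ k : ℝ, n2 k ≠ 0 := by
    intro k hk
    by_cases h1 : k = kc
    · subst h1
      apply dkc; rw [dform, hk]; simp
    by_cases h2 : k = -kc
    · subst h2
      push_cast at hk
      apply dkc'; rw [dform, hk]; simp
    · apply hroots k h1 h2
      have := f3 k
      rw [hk, mul_zero, hmr] at this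
      exact_mod_cast this
  refine ⟨fun x => -(n2 ((2 * π * x : ℝ) : ℂ))⁻¹, ?_, ?_⟩
  · exact ((entire_real_smooth hd2 (2 * π)).inv fun x => nz _).neg
  · intro x
    have h := f3 ((2 * π * x : ℝ) : ℂ)
    simp only [hmC, aC_real] at h
    rw [h]
    have := nz (2 * π * x)
    field_simp
    push_cast
    ring

lemma Tc_L1 {b : ℝ → ℂ} (hb : CCs b) {F : ℝ → ℝ} (hF : Integrable F) :
    Integrable (Tc b F) ∧ ∫ x, ‖Tc b F x‖ ≤ (∫ y, ‖𝓕 b y‖) * ∫ y, |F y| := by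
  have hFc : Integrable (fun x => (F x : ℂ)) := hF.ofReal
  have h1 := hb.fint.integrable_convolution (ContinuousLinearMap.mul ℝ ℂ) hFc
  have h2 := hb.fint.norm.integrable_convolution (ContinuousLinearMap.mul ℝ ℝ) hF.norm
  have h3 := integral_convolution (ContinuousLinearMap.mul ℝ ℝ) hb.fint.norm hF.norm
  refine ⟨h1, ?_⟩
  have h4 : ∫ x, ‖Tc b F x‖ ≤
      ∫ x, convolution (fun y => ‖𝓕 b y‖) (fun y => ‖F y‖) (ContinuousLinearMap.mul ℝ ℝ) volume x := by
    refine integral_mono h1.norm h2 fun x => ?_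
    refine (norm_integral_le_integral_norm _).trans (le_of_eq ?_)
    simp [convolution]
  rw [h3] at h4
  simpa using h4

lemma Aop_cont {F : ℝ → ℝ} (hF : Continuous F) : Continuous (Aop F) := by
  have : Aop F = fun x => (∫ s in (0:ℝ)..(x + 1/2), F s) - ∫ s in (0:ℝ)..(x - 1/2), F s := by
    funext x
    unfold Aop
    exact (intervalIntegral.integral_interval_sub_left (hF.intervalIntegrable 0 (x + 1/2))
      (hF.intervalIntegrable 0 (x - 1/2))).symm
  rw [this]
  have h : Continuous fun z => ∫ s in (0:ℝ)..z, F s :=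
    intervalIntegral.continuous_primitive (μ := volume) (fun a b => hF.intervalIntegrable a b) 0
  exact (h.comp (g := fun z => ∫ s in (0:ℝ)..z, F s) (f := fun x : ℝ => x + 1/2) (by fun_prop)).sub
    (h.comp (g := fun z => ∫ s in (0:ℝ)..z, F s) (f := fun x : ℝ => x - 1/2) (by fun_prop))

lemma Aop_bound {F : ℝ → ℝ} {B : ℝ} (hB : ∀ x, |F x| ≤ B) (x : ℝ) : |Aop F x| ≤ B := by
  have := intervalIntegral.norm_integral_le_of_norm_le_const (a := x - 1/2) (b := x + 1/2)
    (f := F) (C := B) (fun y _ => hB y)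
  have e : |x + 1/2 - (x - 1/2)| = 1 := by norm_num
  rw [e, mul_one] at this
  exact this

lemma Aop_bound_L1 {F : ℝ → ℝ} (hF : Integrable F) (x : ℝ) : |Aop F x| ≤ ∫ y, |F y| := by
  unfold Aop
  rw [intervalIntegral.integral_of_le (by linarith), ← Real.norm_eq_abs]
  refine (norm_integral_le_integral_norm _).trans ?_
  exact setIntegral_le_integral hF.norm (ae_of_all _ fun _ => norm_nonneg _)

lemma Aop_lip {F : ℝ → ℝ} (hF : Continuous F) {B : ℝ} (hB : ∀ x, |F x| ≤ B) (x y : ℝ) :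
    |Aop F x - Aop F y| ≤ 2 * B * |x - y| := by
  have e : Aop F x - Aop F y =
      (∫ s in (y + 1/2)..(x + 1/2), F s) - ∫ s in (y - 1/2)..(x - 1/2), F s := by
    unfold Aop
    have i : ∀ a b, IntervalIntegrable F volume a b := fun a b => hF.intervalIntegrable a b
    rw [← intervalIntegral.integral_interval_sub_left (i 0 _) (i 0 (x - 1/2)),
      ← intervalIntegral.integral_interval_sub_left (i 0 _) (i 0 (y - 1/2)),
      ← intervalIntegral.integral_interval_sub_left (i 0 _) (i 0 (y + 1/2)),
      ← intervalIntegral.integral_interval_sub_left (i 0 (x - 1/2)) (i 0 (y - 1/2))]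
    ring
  have h1 := intervalIntegral.norm_integral_le_of_norm_le_const (a := y + 1/2) (b := x + 1/2)
    (f := F) (C := B) (fun y _ => hB y)
  have h2 := intervalIntegral.norm_integral_le_of_norm_le_const (a := y - 1/2) (b := x - 1/2)
    (f := F) (C := B) (fun y _ => hB y)
  rw [show x + 1/2 - (y + 1/2) = x - y by ring] at h1
  rw [show x - 1/2 - (y - 1/2) = x - y by ring] at h2
  rw [e]
  refine (abs_sub _ _).trans ?_
  simp only [Real.norm_eq_abs] at h1 h2
  linarith

lemma Aop_supp {F : ℝ → ℝ} {r : ℝ} (h : ∀ x, r ≤ |x| → F x = 0) (x : ℝ) (hx : r + 1/2 ≤ |x|) :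
    Aop F x = 0 := by
  unfold Aop
  rw [intervalIntegral.integral_congr (g := fun _ => 0)]
  · simp
  · intro s hs
    apply h
    rw [Set.uIcc_of_le (by linarith)] at hs
    have h1 : |x - s| ≤ 1/2 := abs_le.2 ⟨by linarith [hs.1, hs.2], by linarith [hs.1, hs.2]⟩
    have h2 := abs_sub_abs_le_abs_sub x s
    linarith

lemma Aop_tendsto {F : ℝ → ℝ} (h : Tendsto F atTop (𝓝 0)) : Tendsto (Aop F) atTop (𝓝 0) := by
  rw [Metric.tendsto_atTop] at h ⊢
  intro ε hε
  obtain ⟨N, hN⟩ := h (ε/2) (by linarith)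
  refine ⟨N + 1, fun x hx => ?_⟩
  have := intervalIntegral.norm_integral_le_of_norm_le_const (a := x - 1/2) (b := x + 1/2)
    (f := F) (C := ε/2) (fun y hy => by
      rw [Set.uIoc_of_le (by linarith)] at hy
      have := hN y (by linarith [hy.1])
      rw [dist_zero_right] at this
      exact this.le)
  have e : |x + 1/2 - (x - 1/2)| = 1 := by norm_num
  rw [e, mul_one] at this
  rw [dist_zero_right]
  exact this.trans_lt (by linarith)

lemma Aop_sub {F H : ℝ → ℝ} (hF : Continuous F) (hH : Continuous H) (x : ℝ) :
    Aop (fun y => F y - H y) x = Aop F x - Aop H x :=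
  intervalIntegral.integral_sub (hF.intervalIntegrable _ _) (hH.intervalIntegrable _ _)

lemma AAop_sub {F H : ℝ → ℝ} (hF : Continuous F) (hH : Continuous H) (x : ℝ) :
    Aop (Aop (fun y => F y - H y)) x = Aop (Aop F) x - Aop (Aop H) x := by
  have : Aop (fun y => F y - H y) = fun x => Aop F x - Aop H x := funext (Aop_sub hF hH)
  rw [this, Aop_sub (Aop_cont hF) (Aop_cont hH)]

lemma Aop_const (l : ℝ) : Aop (fun _ => l) = fun _ => l := by
  funext x; unfold Aop; simp; ring

lemma AAG_L1 {G : ℝ → ℝ} (hG : Continuous G) (hs : ∀ x, 1 ≤ |x| → G x = 0) (hGi : Integrable G) :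
    Integrable (Aop (Aop G)) ∧ ∫ x, |Aop (Aop G) x| ≤ 4 * ∫ y, |G y| := by
  have h0 : ∀ x, x ∉ Set.Icc (-2:ℝ) 2 → Aop (Aop G) x = 0 := by
    intro x hx
    refine Aop_supp (fun y hy => Aop_supp hs y hy) x ?_
    by_contra hlt
    push Not at hlt
    apply hx
    have := abs_lt.1 hlt
    exact ⟨by linarith [this.1], by linarith [this.2]⟩
  have hc := Aop_cont (Aop_cont hG)
  have hcs : HasCompactSupport (Aop (Aop G)) := HasCompactSupport.intro isCompact_Icc h0
  refine ⟨hc.integrable_of_hasCompactSupport hcs, ?_⟩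
  rw [← setIntegral_eq_integral_of_forall_compl_eq_zero (s := Set.Icc (-2:ℝ) 2)
    (f := fun x => |Aop (Aop G) x|) (fun x hx => by simp [h0 x hx])]
  have := norm_setIntegral_le_of_norm_le_const (μ := volume) (s := Set.Icc (-2:ℝ) 2)
    (f := fun x => |Aop (Aop G) x|) (C := ∫ y, |G y|) (by simp)
    (fun x _ => by
      rw [Real.norm_eq_abs, abs_abs]
      exact Aop_bound (Aop_bound_L1 hGi) x)
  refine (le_abs_self _).trans (this.trans (le_of_eq ?_))
  rw [Real.volume_real_Icc]; norm_num; ring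

lemma D_lip {c : ℝ} (hc : 0 < c) {D G : ℝ → ℝ} (hD : Continuous D) (hG : Continuous G)
    (hGi : Integrable G) {B : ℝ} (hB : ∀ x, |D x| ≤ B)
    (he : ∀ x, Mop c D x = Aop (Aop G) x) (x y : ℝ) :
    |D x - D y| ≤ 2 * (B + ∫ z, |G z|) / c ^ 2 * |x - y| := by
  have h1 := Aop_lip (Aop_cont hD) (Aop_bound hB) x y
  have h2 := Aop_lip (Aop_cont hG) (Aop_bound_L1 hGi) x y
  have e1 := he x
  have e2 := he y
  unfold Mop at e1 e2
  have e : c ^ 2 * (D x - D y) = (Aop (Aop D) x - Aop (Aop D) y) - (Aop (Aop G) x - Aop (Aop G) y) := by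
    linarith
  have hc2 : 0 < c ^ 2 := by positivity
  have h3 : c ^ 2 * |D x - D y| ≤ 2 * (B + ∫ z, |G z|) * |x - y| := by
    have e' : c ^ 2 * |D x - D y| = |c ^ 2 * (D x - D y)| := by rw [abs_mul, abs_of_pos hc2]
    rw [e', e]
    refine (abs_sub _ _).trans ?_
    linarith
  rw [div_mul_eq_mul_div, le_div_iff₀ hc2]
  linarith

lemma CCs.scale {b : ℝ → ℂ} (hb : CCs b) {K : ℝ} (hK : 0 < K) : CCs (fun x => b (x / K)) := by
  refine ⟨hb.1.comp (contDiff_id.div_const K), ?_⟩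
  have := hb.2.comp_homeomorph (Homeomorph.mulRight₀ K⁻¹ (inv_ne_zero hK.ne'))
  have e : (fun x => b (x / K)) = b ∘ ⇑(Homeomorph.mulRight₀ K⁻¹ (inv_ne_zero hK.ne')) := by
    funext x; simp [div_eq_mul_inv]
  rw [e]; exact this

lemma fourier_scale (b : ℝ → ℂ) {K : ℝ} (hK : 0 < K) (y : ℝ) :
    𝓕 (fun x => b (x / K)) y = K * 𝓕 b (K * y) := by
  rw [Real.fourier_real_eq, Real.fourier_real_eq]
  have := Measure.integral_comp_div (fun w : ℝ => 𝐞 (-(w * (K * y))) • b w) K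
  rw [abs_of_pos hK] at this
  rw [Complex.real_smul] at this
  rw [← this]
  refine integral_congr_ae (ae_of_all _ fun v => ?_)
  beta_reduce
  congr 3
  field_simp

lemma approx {b : ℝ → ℂ} (hb : CCs b) (hb0 : b 0 = 1) {K : ℝ} (hK : 0 < K)
    {F : ℝ → ℝ} (hF : Continuous F) {B : ℝ} (hB : ∀ x, |F x| ≤ B) {L : ℝ}
    (hL : ∀ x y, |F x - F y| ≤ L * |x - y|) (x : ℝ) :
    ‖Tc (fun x => b (x / K)) F x - F x‖ ≤ L * (K⁻¹ * ∫ y, |y| * ‖𝓕 b y‖) := by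
  have hbK := hb.scale hK
  have e1 : (F x : ℂ) = ∫ y, 𝓕 (fun x => b (x / K)) y * (F x : ℂ) := by
    rw [integral_mul_const, hbK.fint_total]; simp [hb0]
  rw [e1]
  unfold Tc
  rw [← integral_sub (Tc_integrand hbK hF hB x) (hbK.fint.mul_const _)]
  have e2 : K⁻¹ * ∫ y, |y| * ‖𝓕 b y‖ = ∫ y, |y| * ‖𝓕 (fun x => b (x / K)) y‖ := by
    have := Measure.integral_comp_mul_left (fun y => |y| * ‖𝓕 b y‖) K
    rw [abs_of_pos (inv_pos.2 hK), smul_eq_mul] at this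
    rw [← this]
    refine integral_congr_ae (ae_of_all _ fun y => ?_)
    beta_reduce
    rw [fourier_scale b hK, norm_mul, abs_mul, Complex.norm_real, Real.norm_eq_abs]
    ring
  rw [e2, ← integral_const_mul]
  refine (norm_integral_le_integral_norm _).trans ?_
  refine integral_mono_of_nonneg (ae_of_all _ fun _ => norm_nonneg _)
    (hbK.fint1.const_mul L) (ae_of_all _ fun y => ?_)
  beta_reduce
  rw [← mul_sub, norm_mul, ← Complex.ofReal_sub, Complex.norm_real, Real.norm_eq_abs]
  have := hL (x - y) x
  rw [show x - y - x = -y by ring, abs_neg] at this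
  calc _ ≤ ‖𝓕 (fun x => b (x / K)) y‖ * (L * |y|) :=
        mul_le_mul_of_nonneg_left this (norm_nonneg _)
    _ = _ := by ring

lemma fourier_lin {p q : ℝ → ℂ} (hp : CCs p) (hq : CCs q) (k : ℂ) (y : ℝ) :
    𝓕 (fun x => p x + k * q x) y = 𝓕 p y + k * 𝓕 q y := by
  have hi : ∀ {p : ℝ → ℂ}, CCs p → Integrable (fun v => 𝐞 (-(v * y)) • p v) := by
    intro p hp
    refine (hp.integrable.bdd_mul (c := 1) (f := fun v => ((𝐞 (-(v * y)) : Circle) : ℂ)) ?_ ?_).congr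
      (ae_of_all _ fun v => ?_)
    · have : Continuous fun v : ℝ => ((𝐞 (-(v * y)) : Circle) : ℂ) := by
        simp_rw [Real.fourierChar_apply]; fun_prop
      exact this.aestronglyMeasurable
    · exact ae_of_all _ fun v => (Circle.norm_coe _).le
    · simp [Circle.smul_def]
  simp_rw [Real.fourier_real_eq]
  rw [← integral_const_mul, ← integral_add (hi hp) ((hi hq).const_mul k)]
  refine integral_congr_ae (ae_of_all _ fun v => ?_)
  simp only [Circle.smul_def, smul_eq_mul]
  ring

lemma Tc_lin {p q : ℝ → ℂ} (hp : CCs p) (hq : CCs q) (k : ℂ) {F : ℝ → ℝ} (hF : Continuous F)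
    {B : ℝ} (hB : ∀ x, |F x| ≤ B) (x : ℝ) :
    Tc (fun x => p x + k * q x) F x = Tc p F x + k * Tc q F x := by
  unfold Tc
  rw [← integral_const_mul, ← integral_add (Tc_integrand hp hF hB x)
    ((Tc_integrand hq hF hB x).const_mul k)]
  refine integral_congr_ae (ae_of_all _ fun v => ?_)
  beta_reduce
  rw [fourier_lin hp hq]
  ring

lemma CCs.lin {p q : ℝ → ℂ} (hp : CCs p) (hq : CCs q) (k : ℂ) : CCs (fun x => p x + k * q x) :=
  ⟨hp.1.add (contDiff_const.mul hq.1), hp.2.add hq.2.mul_left⟩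

theorem linear_est (c kc : ℝ) (hc0 : 0 < c) (hkc : 0 < kc)
    (ha : symb kc = c) (hm' : deriv (msymb c) kc ≠ 0)
    (hroots : ∀ k : ℝ, k ≠ kc → k ≠ -kc → msymb c k ≠ 0) :
    ∃ C : ℝ, 0 ≤ C ∧ ∀ D G : ℝ → ℝ, Continuous G → (∀ x, 1 ≤ |x| → G x = 0) → Integrable G →
      Differentiable ℝ D → (∃ B, ∀ x, |D x| ≤ B ∧ |deriv D x| ≤ B) → Tendsto D atTop (𝓝 0) →
      (∀ x, Mop c D x = Aop (Aop G) x) → ∀ x, |D x| ≤ C * ∫ y, |G y| := by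
  obtain ⟨v, hv, hvm⟩ := exists_mult c kc hkc ha hm' hroots
  let bump : ContDiffBump (0:ℝ) := ⟨1, 2, by norm_num, by norm_num⟩
  let χ : ℝ → ℂ := fun x => (bump x : ℂ)
  have hχ : CCs χ := ⟨Complex.ofRealCLM.contDiff.comp bump.contDiff,
    bump.hasCompactSupport.comp_left (g := fun r : ℝ => (r : ℂ)) (by simp)⟩
  have hχ0 : χ 0 = 1 := by
    have : bump 0 = 1 := bump.one_of_mem_closedBall (by simp [bump])
    simp [χ, this]
  set C0 := ∫ y, |y| * ‖𝓕 χ y‖ with hC0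
  have hC0n : 0 ≤ C0 := integral_nonneg fun y => by positivity
  have hc2 : 0 < c ^ 2 := by positivity
  set K := 4 * C0 / c ^ 2 + 1 with hK
  have hKp : 0 < K := by positivity
  set b0 : ℝ → ℂ := fun x => χ (x / K) with hb0
  have h0 : CCs b0 := hχ.scale hKp
  set b1 : ℝ → ℂ := fun x => v x * b0 x with hb1
  have h1 : CCs b1 := h0.mul_left hv
  set C1 := ∫ y, ‖𝓕 b1 y‖ with hC1
  have hC1n : 0 ≤ C1 := integral_nonneg fun y => norm_nonneg _
  refine ⟨8 * C1 / kc + 1, by positivity, ?_⟩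
  rintro D G hG hs hGi hD ⟨B', hB'⟩ ht he
  set γ := ∫ y, |G y| with hγ
  have hDc := hD.continuous
  have hDb : ∀ x, |D x| ≤ B' := fun x => (hB' x).1
  have hDd : ∀ x, |deriv D x| ≤ B' := fun x => (hB' x).2
  obtain ⟨i1, i2⟩ := AAG_L1 hG hs hGi
  obtain ⟨j1, j2⟩ := Tc_L1 h1 i1
  have h2 : CCs (fun v => (symb (2 * π * v) : ℂ) * b1 v) := h1.mul_left symb_smooth
  have h3 : CCs (fun v => (symb (2 * π * v) : ℂ) * ((symb (2 * π * v) : ℂ) * b1 v)) :=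
    h2.mul_left symb_smooth
  have hX2 := h0.mulX.mulX
  have feq : ∀ x, Tc (fun x : ℝ => (-2 * π * Complex.I * x) * ((-2 * π * Complex.I * x) * b0 x)) D x
      + kc ^ 2 * Tc b0 D x = Tc b1 (Aop (Aop G)) x := by
    intro x
    have e0 : Aop (Aop G) = fun x => Aop (Aop D) x - c ^ 2 * D x := by
      funext x; rw [← he x]; rfl
    have e1 : Tc b1 (Aop (Aop G)) x = Tc b1 (Aop (Aop D)) x - c ^ 2 * Tc b1 D x := by
      rw [e0]
      unfold Tc
      rw [← integral_const_mul, ← integral_sub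
        (Tc_integrand h1 (Aop_cont (Aop_cont hDc)) (Aop_bound (Aop_bound hDb)) x)
        ((Tc_integrand h1 hDc hDb x).const_mul _)]
      refine integral_congr_ae (ae_of_all _ fun v => ?_)
      beta_reduce
      push_cast
      ring
    rw [e1, Tc_Aop h1 (Aop_cont hDc) (Aop_bound hDb), Tc_Aop h2 hDc hDb,
      ← Tc_lin hX2 h0 _ hDc hDb]
    have e2 : (fun v => (symb (2 * π * v) : ℂ) * ((symb (2 * π * v) : ℂ) * b1 v)) =
      fun x => ((-2 * π * Complex.I * x) * ((-2 * π * Complex.I * x) * b0 x)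
        + kc ^ 2 * b0 x) + c ^ 2 * b1 x := by
      funext x
      have := hvm x
      simp only [hb1]
      linear_combination b0 x * this - 4 * π ^ 2 * x ^ 2 * b0 x * Complex.I_sq
    rw [e2, Tc_lin (hX2.lin h0 _) h1 _ hDc hDb]
    ring
  have hW : ∀ x, ‖Tc b0 D x‖ ≤ (4 * C1 / kc) * γ := by
    intro x
    have := ode_bound hkc j1 (W := Tc b0 D) (fun x => Tc_hasDeriv h0 hD hDb hDd x)
      (fun x => Tc_hasDeriv h0.mulX hD hDb hDd x) feq (Tc_tendsto h0 hDc hDb ht)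
      (Tc_tendsto h0.mulX hDc hDb ht) x
    refine this.trans ?_
    rw [div_mul_eq_mul_div]
    gcongr
    refine j2.trans ?_
    have := mul_le_mul_of_nonneg_left i2 hC1n
    linarith
  have step : ∀ B, (∀ x, |D x| ≤ B) → ∀ x, |D x| ≤ (4 * C1 / kc) * γ + (B + γ) / 2 := by
    intro B hB x
    have hBn : 0 ≤ B := (abs_nonneg _).trans (hB 0)
    have hγn : 0 ≤ γ := integral_nonneg fun y => abs_nonneg _
    have a1 := approx hχ hχ0 hKp hDc hB (D_lip hc0 hDc hG hGi hB he) x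
    have a2 : 2 * (B + γ) / c ^ 2 * (K⁻¹ * C0) ≤ (B + γ) / 2 := by
      have : K⁻¹ * C0 ≤ c ^ 2 / 4 := by
        rw [inv_mul_le_iff₀ hKp, hK]
        have : (4 * C0 / c ^ 2 + 1) * (c ^ 2 / 4) = C0 + c ^ 2 / 4 := by field_simp
        rw [this]; linarith
      calc _ ≤ 2 * (B + γ) / c ^ 2 * (c ^ 2 / 4) := by gcongr
        _ = _ := by field_simp; ring
    have a3 : |D x| = ‖(D x : ℂ)‖ := by simp
    have a4 : (D x : ℂ) = Tc b0 D x - (Tc b0 D x - D x) := by ring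
    rw [a3, a4]
    refine (norm_sub_le _ _).trans ?_
    have := hW x
    have := a1.trans a2
    linarith
  have hbdd : BddAbove (Set.range fun x => |D x|) := ⟨B', by rintro _ ⟨x, rfl⟩; exact hDb x⟩
  set B := ⨆ x, |D x| with hBdef
  have hB : ∀ x, |D x| ≤ B := fun x => le_ciSup hbdd x
  have hBle : B ≤ (4 * C1 / kc) * γ + (B + γ) / 2 := ciSup_le (step B hB)
  intro x
  refine (hB x).trans ?_
  have : 8 * C1 / kc = 2 * (4 * C1 / kc) := by ring
  rw [this]
  linarith

lemma smallness (κ : ℝ) (hκ1 : 1 / 2 < κ) (hκ2 : κ < 1) (Q d : ℝ) (hd : 0 < d) :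
    ∃ δκ : ℝ, 0 < δκ ∧ ∀ δ : ℝ, 0 < δ → δ < δκ →
      δ ^ κ ≤ 1 ∧ 2 * δ ≤ d * δ ^ κ ∧ Q * (δ ^ κ * δ ^ κ / δ) ≤ 1 / 2 := by
  have ht : ∀ s : ℝ, 0 < s → Tendsto (fun δ : ℝ => δ ^ s) (𝓝[>] 0) (𝓝 0) := by
    intro s hs
    have := (Real.continuousAt_rpow_const 0 s (Or.inr hs.le)).tendsto
    rw [Real.zero_rpow hs.ne'] at this
    exact this.mono_left nhdsWithin_le_nhds
  have t1 := (ht κ (by linarith)).eventually_le_const (u := 1) one_pos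
  have t2 := (ht (1 - κ) (by linarith)).eventually_le_const (u := d / 2) (by linarith)
  have t3 := ((ht (2 * κ - 1) (by linarith)).const_mul Q).eventually_le_const (u := 1 / 2) (by norm_num)
  obtain ⟨u, hu, hsub⟩ := mem_nhdsGT_iff_exists_Ioo_subset.1 (t1.and (t2.and t3))
  refine ⟨u, hu, fun δ h0 h1 => ?_⟩
  obtain ⟨a1, a2, a3⟩ := hsub ⟨h0, h1⟩
  refine ⟨a1, ?_, ?_⟩
  · have e : δ = δ ^ (1 - κ) * δ ^ κ := by
      rw [← Real.rpow_add h0]; simp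
    have hp : 0 < δ ^ κ := Real.rpow_pos_of_pos h0 _
    have := mul_le_mul_of_nonneg_right a2 hp.le
    rw [← e] at this
    linarith
  · have e : δ ^ κ * δ ^ κ / δ = δ ^ (2 * κ - 1) := by
      rw [Real.rpow_sub_one h0.ne', two_mul, Real.rpow_add h0]
    rw [e]; exact a3

/-- crossing point bound -/
lemma cross {f : ℝ → ℝ} (hf : Differentiable ℝ f) {a b s : ℝ} (hab : a < b)
    (hs : ∀ x, a < x → x < b → s < deriv f x) : s * (b - a) ≤ f b - f a := by
  obtain ⟨z, hz, hzd⟩ := exists_deriv_eq_slope f hab hf.continuous.continuousOn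
    hf.differentiableOn
  have h := hs z hz.1 hz.2
  rw [hzd, lt_div_iff₀ (by linarith)] at h
  exact h.le

end helpers

/-- a phase transition wave `R` that has the same tail behaviour as `R₀`
at `+∞` and crosses the spinodal region inside `[-δ^κ, δ^κ]` coincides with `R₀ + S`
for every `δ`-admissible corrector `S ∈ X` solving the fixed point equation. -/
theorem stmt16 (c kc : ℝ) (hc0 : 0 < c) (hc1 : c < 1) (hkc : 0 < kc)
    (ha : symb kc = c) (hm' : deriv (msymb c) kc ≠ 0)
    (hroots : ∀ k : ℝ, k ≠ kc → k ≠ -kc → msymb c k ≠ 0)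
    (Ψ : ℝ → ℝ → ℝ) (CΨ : ℝ) (hA : AssumptionA Ψ CΨ)
    (hI : ∀ δ : ℝ, 0 < δ → Idelta Ψ δ = 0)
    (R₀ : ℝ → ℝ) (hR₀ : UnperturbedWave c R₀)
    (κ : ℝ) (hκ1 : 1 / 2 < κ) (hκ2 : κ < 1) :
    ∃ δκ : ℝ, 0 < δκ ∧
      ∀ δ : ℝ, 0 < δ → δ < δκ →
        ∀ (R : ℝ → ℝ) (μ : ℝ), IsW2inf R →
          (∀ x, Mop c R x = Aop (Aop (fun y => deriv (Ψ δ) (R y))) x + μ) →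
          R 0 = 0 →
          (∃ l : ℝ, Tendsto (fun x => R x - R₀ x) atTop (nhds l)) →
          (∀ x : ℝ, x ≤ -(δ ^ κ) → R x ≤ -δ) → (∀ x : ℝ, δ ^ κ ≤ x → δ ≤ R x) →
          ∀ S : ℝ → ℝ, IsX S → Admissible δ R₀ S →
            (∃ μ' : ℝ, ∀ x, Mop c (fun y => R₀ y + S y) x
                = Aop (Aop (fun y => deriv (Ψ δ) (R₀ y + S y))) x + μ') →
            ∀ x, R x = R₀ x + S x := by
  obtain ⟨C, hC, hlin⟩ := linear_est c kc hc0 hkc ha hm' hroots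
  obtain ⟨⟨hR₀d, ⟨BR₀, hBR₀⟩, -⟩, hR₀0, -, x₀, r₀, d₀, hx₀, -, hd₀, -, -, hder⟩ := hR₀
  have hd : 0 < deriv R₀ 0 := hd₀.trans (hder 0 (by simpa using hx₀))
  obtain ⟨hCΨ, hΨ⟩ := hA
  have hc2 : 0 < c ^ 2 := by positivity
  obtain ⟨δκ, hδκ, hsm⟩ := smallness κ hκ1 hκ2 (2 * CΨ * (2 * (C + 1) / c ^ 2)) (deriv R₀ 0) hd
  refine ⟨δκ, hδκ, ?_⟩
  rintro δ hδ hδlt R μ ⟨hRd, ⟨BR, hBR⟩, -⟩ hRe hR0 ⟨l1, hl1⟩ hRm hRp S ⟨-, -, l2, hl2⟩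
    ⟨⟨hSd, ⟨BS, hBS⟩, -⟩, hS0, xm, xp, hxm, hxp, hvm, hvp, hlm, hlp, hmid⟩ ⟨μ', hSe⟩
  obtain ⟨hε1, hε2, hε3⟩ := hsm δ hδ hδlt
  obtain ⟨-, hΨc, hΨs, -, hΨ2⟩ := hΨ δ hδ
  set ε := δ ^ κ with hε
  have hεp : 0 < ε := Real.rpow_pos_of_pos hδ _
  have hψd : Differentiable ℝ (deriv (Ψ δ)) := by
    have h1 : ContDiff ℝ (1 + 1) (Ψ δ) := by
      have e : (1 + 1 : WithTop ℕ∞) = 2 := by norm_num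
      rw [e]; exact hΨc
    exact ((contDiff_succ_iff_deriv.1 h1).2.2).differentiable (by simp)
  have hψc : Continuous (deriv (Ψ δ)) := hψd.continuous
  have hψl : ∀ r s, |deriv (Ψ δ) r - deriv (Ψ δ) s| ≤ CΨ / δ * |r - s| := by
    intro r s
    exact Convex.norm_image_sub_le_of_norm_deriv_le (s := Set.univ) (fun x _ => hψd x)
      (fun x _ => hΨ2 x) convex_univ (Set.mem_univ s) (Set.mem_univ r)
  set R2 : ℝ → ℝ := fun y => R₀ y + S y with hR2
  have hR2d : Differentiable ℝ R2 := hR₀d.add hSd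
  have hR2der : ∀ x, deriv R2 x = deriv R₀ x + deriv S x := fun x => deriv_add (hR₀d x) (hSd x)
  have hR20 : R2 0 = 0 := by simp [hR2, hR₀0, hS0]
  have hxpε : xp ≤ ε := by
    have h := cross hR2d hxp (s := deriv R₀ 0 / 2)
      (fun x h1 h2 => by rw [hR2der]; exact (hmid x (hxm.trans h1) h2).1)
    rw [hR20] at h
    have : R2 xp = δ := hvp
    rw [this] at h
    have h2 : deriv R₀ 0 * xp ≤ deriv R₀ 0 * ε := by linarith
    exact le_of_mul_le_mul_left h2 hd
  have hxmε : -ε ≤ xm := by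
    have h := cross hR2d hxm (s := deriv R₀ 0 / 2)
      (fun x h1 h2 => by rw [hR2der]; exact (hmid x h1 (h2.trans hxp)).1)
    rw [hR20] at h
    have : R2 xm = -δ := hvm
    rw [this] at h
    have h2 : deriv R₀ 0 * (-xm) ≤ deriv R₀ 0 * ε := by linarith
    have := le_of_mul_le_mul_left h2 hd
    linarith
  have hR2p : ∀ x, ε ≤ x → δ ≤ R2 x := by
    intro x hx
    rcases (hxpε.trans hx).eq_or_lt with h | h
    · rw [← h]; exact hvp.ge
    · exact (hlp x h).le
  have hR2m : ∀ x, x ≤ -ε → R2 x ≤ -δ := by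
    intro x hx
    rcases (hx.trans hxmε).eq_or_lt with h | h
    · rw [h]; exact hvm.le
    · exact (hlm x h).le
  have ψp : ∀ r, δ ≤ r → deriv (Ψ δ) r = 1 := by
    intro r hr
    rw [hΨs r (hr.trans (le_abs_self r)), Real.sign_of_pos (hδ.trans_le hr)]
  have ψm : ∀ r, r ≤ -δ → deriv (Ψ δ) r = -1 := by
    intro r hr
    rw [hΨs r (by rw [abs_of_neg (by linarith)]; linarith), Real.sign_of_neg (by linarith)]
  set G : ℝ → ℝ := fun y => deriv (Ψ δ) (R y) - deriv (Ψ δ) (R2 y) with hGdef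
  have hG1 : Continuous fun y => deriv (Ψ δ) (R y) := hψc.comp hRd.continuous
  have hG2 : Continuous fun y => deriv (Ψ δ) (R2 y) := hψc.comp hR2d.continuous
  have hGc : Continuous G := hG1.sub hG2
  have hGs : ∀ x, ε ≤ |x| → G x = 0 := by
    intro x hx
    rcases le_abs.1 hx with h | h
    · simp only [hGdef]; rw [ψp _ (hRp x h), ψp _ (hR2p x h), sub_self]
    · have h : x ≤ -ε := by linarith
      simp only [hGdef]; rw [ψm _ (hRm x h), ψm _ (hR2m x h), sub_self]
  have hGs1 : ∀ x, 1 ≤ |x| → G x = 0 := fun x hx => hGs x (hε1.trans hx)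
  have hGIcc : ∀ x, x ∉ Set.Icc (-ε) ε → G x = 0 := by
    intro x hx
    apply hGs
    by_contra hlt
    push Not at hlt
    have := abs_lt.1 hlt
    exact hx ⟨this.1.le, this.2.le⟩
  have hGi : Integrable G :=
    hGc.integrable_of_hasCompactSupport (HasCompactSupport.intro isCompact_Icc hGIcc)
  -- the shifted difference
  set D₀ : ℝ → ℝ := fun y => R y - R2 y with hD₀
  have hD₀d : Differentiable ℝ D₀ := hRd.sub hR2d
  set l := l1 - l2 with hl
  have hD₀l : Tendsto D₀ atTop (𝓝 l) := by
    refine (hl1.sub hl2).congr fun x => ?_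
    simp only [hD₀, hR2]; ring
  set D : ℝ → ℝ := fun y => D₀ y - l with hDdef
  have hDd : Differentiable ℝ D := hD₀d.sub_const l
  have hDt : Tendsto D atTop (𝓝 0) := by simpa using hD₀l.sub_const l
  have hDb : ∃ B, ∀ x, |D x| ≤ B ∧ |deriv D x| ≤ B := by
    refine ⟨BR + BR₀ + BS + |l|, fun x => ⟨?_, ?_⟩⟩
    · have h1 := abs_le.1 (hBR x).1
      have h2 := abs_le.1 (hBR₀ x).1
      have h3 := abs_le.1 (hBS x).1
      have h4 := abs_le.1 (le_refl |l|)
      simp only [hDdef, hD₀, hR2]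
      rw [abs_le]; constructor <;> linarith [h1.1, h1.2, h2.1, h2.2, h3.1, h3.2, h4.1, h4.2]
    · have e : deriv D x = deriv R x - (deriv R₀ x + deriv S x) := by
        rw [← hR2der]
        have : HasDerivAt D (deriv R x - deriv R2 x) x :=
          ((hRd x).hasDerivAt.sub (hR2d x).hasDerivAt).sub_const l
        exact this.deriv
      have h1 := abs_le.1 (hBR x).2
      have h2 := abs_le.1 (hBR₀ x).2
      have h3 := abs_le.1 (hBS x).2
      have h4 := abs_nonneg l
      rw [e, abs_le]; constructor <;> linarith [h1.1, h1.2, h2.1, h2.2, h3.1, h3.2]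
  have hDe' : ∀ x, Mop c D x = Aop (Aop G) x + (μ - μ' - (1 - c ^ 2) * l) := by
    intro x
    have e1 := hRe x
    have e2 := hSe x
    have e3 := AAop_sub hG1 hG2 x
    have e4 := AAop_sub hRd.continuous hR2d.continuous x
    have e5 := AAop_sub hD₀d.continuous (continuous_const (y := l)) x
    rw [Aop_const, Aop_const] at e5
    unfold Mop at e1 e2 ⊢
    have e6 : Aop (Aop D) x = Aop (Aop R) x - Aop (Aop R2) x - l := by
      rw [← e4]; exact e5
    have e7 : Aop (Aop G) x = Aop (Aop fun y => deriv (Ψ δ) (R y)) x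
      - Aop (Aop fun y => deriv (Ψ δ) (R2 y)) x := e3
    have e8 : D x = R x - R2 x - l := rfl
    rw [e6, e7, e8]
    linarith
  have hν : μ - μ' - (1 - c ^ 2) * l = 0 := by
    have t1 : Tendsto (Mop c D) atTop (𝓝 0) := by
      have := (Aop_tendsto (Aop_tendsto hDt)).sub (hDt.const_mul (c ^ 2))
      rw [mul_zero, sub_zero] at this
      exact this
    have t2 : Tendsto (Mop c D) atTop (𝓝 (μ - μ' - (1 - c ^ 2) * l)) := by
      refine tendsto_const_nhds.congr' ?_
      filter_upwards [eventually_ge_atTop (2:ℝ)] with x hx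
      rw [hDe' x, Aop_supp (fun y hy => Aop_supp hGs1 y hy) x
        (by rw [abs_of_nonneg (by linarith)]; linarith), zero_add]
    exact tendsto_nhds_unique t2 t1
  have hDe : ∀ x, Mop c D x = Aop (Aop G) x := by
    intro x; rw [hDe' x, hν, add_zero]
  have hest := hlin D G hGc hGs1 hGi hDd hDb hDt hDe
  set γ := ∫ y, |G y| with hγ
  have hγn : 0 ≤ γ := integral_nonneg fun y => abs_nonneg _
  have hlip := D_lip hc0 hDd.continuous hGc hGi hest hDe
  set P := 2 * (C + 1) / c ^ 2 * γ with hP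
  have hPn : 0 ≤ P := by positivity
  have hD₀0 : D₀ 0 = 0 := by simp only [hD₀]; rw [hR0, hR20, sub_zero]
  have hD₀b : ∀ x, |D₀ x| ≤ P * |x| := by
    intro x
    have h := hlip x 0
    have e : D x - D 0 = D₀ x := by
      simp only [hDdef]; rw [hD₀0]; ring
    rw [e, sub_zero] at h
    refine h.trans (le_of_eq ?_)
    rw [hP]; ring
  have hγle : γ ≤ CΨ / δ * (P * ε) * (2 * ε) := by
    have e : γ = ∫ x in Set.Icc (-ε) ε, |G x| :=
      (setIntegral_eq_integral_of_forall_compl_eq_zero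
        (f := fun x => |G x|) (fun x hx => by simp [hGIcc x hx])).symm
    have h := norm_setIntegral_le_of_norm_le_const (μ := volume) (s := Set.Icc (-ε) ε)
      (f := fun x => |G x|) (C := CΨ / δ * (P * ε)) (by simp)
      (fun x hx => by
        rw [Real.norm_eq_abs, abs_abs]
        refine (hψl (R x) (R2 x)).trans ?_
        have h1 := hD₀b x
        have h2 : |x| ≤ ε := abs_le.2 hx
        have h3 : |R x - R2 x| ≤ P * ε := h1.trans (mul_le_mul_of_nonneg_left h2 hPn)
        exact mul_le_mul_of_nonneg_left h3 (by positivity))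
    rw [← e, Real.volume_real_Icc_of_le (by linarith)] at h
    refine (le_abs_self _).trans (h.trans (le_of_eq ?_))
    ring
  have hγ0 : γ = 0 := by
    have e : CΨ / δ * (P * ε) * (2 * ε) =
        2 * CΨ * (2 * (C + 1) / c ^ 2) * (ε * ε / δ) * γ := by
      rw [hP]; ring
    rw [e] at hγle
    have := mul_le_mul_of_nonneg_right hε3 hγn
    linarith
  intro x
  have h := hD₀b x
  rw [hP, hγ0, mul_zero, zero_mul] at h
  have h0 : D₀ x = 0 := abs_eq_zero.1 (le_antisymm h (abs_nonneg _))
  have : R x - (R₀ x + S x) = 0 := h0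
  linarith
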